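/- Let λ ≥ 2, let θ ∈ S¹, and let ⟨g_i⟩ be a geodesic ray or geodesic segment in F₂. If for some n ≥ 0 one has ‖ρ_λ(g_{n+1})θ‖ > ‖ρ_λ(g_n)θ‖ (respectively ‖ρ_λ(g_{n+1})θ‖ ≥ ‖ρ_λ(g_n)θ‖), then the sequence j ↦ ‖ρ_λ(g_{n+j})θ‖ (for j ≥ 0, as long as g_{n+j} is defined) is strictly increasing (respectively non-strictly increasing). -/

import Mathlib

noncomputable section

abbrev F2 := FreeGroup Bool

def gh : F2 := FreeGroup.of true
def gv : F2 := FreeGroup.of false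

def hmat (l : ℝ) : Matrix.SpecialLinearGroup (Fin 2) ℝ :=
  ⟨!![1, l; 0, 1], by norm_num [Matrix.det_fin_two_of]⟩

def vmat (l : ℝ) : Matrix.SpecialLinearGroup (Fin 2) ℝ :=
  ⟨!![1, 0; l, 1], by norm_num [Matrix.det_fin_two_of]⟩

def rho (l : ℝ) : F2 →* Matrix.SpecialLinearGroup (Fin 2) ℝ :=
  FreeGroup.lift fun b => if b then hmat l else vmat l

def act (l : ℝ) (g : F2) (x : Fin 2 → ℝ) : Fin 2 → ℝ :=
  (rho l g).val.mulVec x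

def nrm (x : Fin 2 → ℝ) : ℝ := Real.sqrt (x 0 ^ 2 + x 1 ^ 2)

def Circ : Set (Fin 2 → ℝ) := {x | nrm x = 1}

def gens : Set F2 := {gh, gv, gh⁻¹, gv⁻¹}

def ShrinkSet (l : ℝ) (g : F2) : Set (Fin 2 → ℝ) :=
  {x | x ∈ Circ ∧ nrm (act l g x) < 1}

def ExpSet (l : ℝ) (g : F2) : Set (Fin 2 → ℝ) :=
  {x | x ∈ Circ ∧ 1 < nrm (act l g x)}

def IsGeodesicRay (g : ℕ → F2) : Prop :=
  g 0 = 1 ∧ (∀ n, g (n + 1) * (g n)⁻¹ ∈ gens) ∧ ∀ n, g (n + 2) * (g n)⁻¹ ≠ 1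

def IsGeodesicSegment (g : ℕ → F2) (N : ℕ) : Prop :=
  g 0 = 1 ∧ (∀ n, n + 1 ≤ N → g (n + 1) * (g n)⁻¹ ∈ gens) ∧
    ∀ n, n + 2 ≤ N → g (n + 2) * (g n)⁻¹ ≠ 1

def IsShrinkingSeq (l : ℝ) (g : ℕ → F2) (θ : Fin 2 → ℝ) : Prop :=
  ∀ ε : ℝ, 0 < ε → ∃ i : ℕ, nrm (act l (g i) θ) < ε

def Shrinkable (l : ℝ) (θ : Fin 2 → ℝ) : Prop :=
  ∀ ε : ℝ, 0 < ε → ∃ g : F2, nrm (act l g θ) < ε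

def Renormalizable (l : ℝ) (θ : Fin 2 → ℝ) : Prop :=
  Shrinkable l θ ∧ ∀ k : F2, ∀ c : ℝ, act l (k * (gh * gv⁻¹) * k⁻¹) θ ≠ c • θ

abbrev SP := Bool × Bool

def Quad (s : SP) : Set (Fin 2 → ℝ) :=
  {x | (if s.1 then 0 < x 0 else x 0 < 0) ∧ (if s.2 then 0 < x 1 else x 1 < 0)}

def letterSigma : Bool × Bool → SP → SP
  | (true, true), s => (s.2, s.2)
  | (false, true), s => (s.1, s.1)
  | (true, false), s => (!s.2, s.2)
  | (false, false), s => (s.1, !s.1)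

def SigmaAct (g : F2) : SP → SP :=
  (FreeGroup.toWord g).foldr (fun w acc => letterSigma w ∘ acc) id

def gammaAut : F2 →* F2 := FreeGroup.lift fun b => if b then gv⁻¹ else gh⁻¹

def rPerm (s : SP) : SP := (!s.2, s.1)

def rPermInv (s : SP) : SP := (s.2, !s.1)

def shiftRay (g : ℕ → F2) : ℕ → F2 := fun n => g (n + 1) * (g 1)⁻¹

def TailEquiv (g g' : ℕ → F2) : Prop :=
  ∃ m n : ℕ, shiftRay^[m] g = shiftRay^[n] g'

def seqPow (a : F2) : ℕ → F2 := fun n => a ^ n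

def seqPer (a b : F2) : ℕ → F2 := fun n =>
  if n % 2 = 0 then (b * a) ^ (n / 2) else a * (b * a) ^ (n / 2)

def Cond1 (g : ℕ → F2) : Prop :=
  ¬ TailEquiv g (seqPow gh) ∧ ¬ TailEquiv g (seqPow gh⁻¹) ∧
    ¬ TailEquiv g (seqPow gv) ∧ ¬ TailEquiv g (seqPow gv⁻¹)

def Cond2 (g : ℕ → F2) : Prop :=
  ¬ TailEquiv g (seqPer gh gv⁻¹) ∧ ¬ TailEquiv g (seqPer gh⁻¹ gv)

def adjSum {V : Type} (G : SimpleGraph V) (f : V → ℝ) (v : V) : ℝ :=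
  ∑ᶠ w ∈ G.neighborSet v, f w

def BoundedValance {V : Type} (G : SimpleGraph V) : Prop :=
  ∃ D : ℕ, ∀ v, (G.neighborSet v).Finite ∧ (G.neighborSet v).ncard ≤ D

def BipartWith {V : Type} (G : SimpleGraph V) (A : Set V) : Prop :=
  ∀ v w, G.Adj v w → (v ∈ A ↔ w ∉ A)

def Hop {V : Type} (G : SimpleGraph V) (A : Set V) (k : ℤ) (f : V → ℝ) : V → ℝ :=
  fun v => f v + (k : ℝ) * Set.indicator A (adjSum G f) v

def Vop {V : Type} (G : SimpleGraph V) (A : Set V) (k : ℤ) (f : V → ℝ) : V → ℝ :=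
  fun v => f v + (k : ℝ) * Set.indicator Aᶜ (adjSum G f) v

def QuadV {V : Type} (A : Set V) (s : SP) : Set (V → ℝ) :=
  {f | (∀ v ∈ A, f v = 0 ∨ (if s.1 then 0 < f v else f v < 0)) ∧
       ∀ v, v ∉ A → f v = 0 ∨ (if s.2 then 0 < f v else f v < 0)}

def valance {V : Type} (G : SimpleGraph V) (v : V) : ℕ := (G.neighborSet v).ncard

def evec {V : Type} (v : V) : V → ℝ := Set.indicator {v} 1

def InSpoke {V : Type} (G : SimpleGraph V) (x : V) : Prop :=
  ∃ k : ℕ, 2 ≤ k ∧ ∃ c : ℕ → V,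
    (∀ i j, 1 ≤ i → i ≤ k → 1 ≤ j → j ≤ k → c i = c j → i = j) ∧
    valance G (c 1) = 1 ∧
    (∀ i, 2 ≤ i → i ≤ k - 1 →
      valance G (c i) = 2 ∧ G.Adj (c i) (c (i - 1)) ∧ G.Adj (c i) (c (i + 1))) ∧
    ∃ i, 1 ≤ i ∧ i ≤ k ∧ x = c i

/-!
Along a geodesic the squared norms `‖ρ_λ(g_i) θ‖²` form a convex sequence, so they keep growing from
the first step at which they grow. The neighbours of `w = ρ_λ(g_{i+1}) θ` on the path are `s w` and
`t w` for two distinct letters `s`, `t`, so convexity at `w` is `2‖w‖² ≤ ‖s w‖² + ‖t w‖²`. The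
letters change `‖w‖²` by `±2λ w₀ w₁ + λ² w₁²` (for `h^{±1}`) and `±2λ w₀ w₁ + λ² w₀²` (for
`v^{±1}`). The critical pairs are `h, v` and `h⁻¹, v⁻¹`, where the inequality follows from
`4 |λ w₀ w₁| ≤ λ² (w₀² + w₁²)`, which holds as soon as `|λ| ≥ 2`.
-/

section ConvexSequences

variable {α : Type*} [AddCommGroup α] [PartialOrder α] {a : ℕ → α} {s t : Set ℕ} {n : ℕ}

/-- Discrete convexity of the sequence `a` along the indices in `s`: consecutive increments are
nondecreasing. Only the endpoints `i` and `i + 2` are asked to lie in `s`, which is meant to be an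
interval. -/
def ConvexSeqOn (a : ℕ → α) (s : Set ℕ) : Prop :=
  ∀ i ∈ s, i + 2 ∈ s → a (i + 1) - a i ≤ a (i + 2) - a (i + 1)

lemma ConvexSeqOn.mono (ha : ConvexSeqOn a t) (hst : s ⊆ t) : ConvexSeqOn a s :=
  fun i hi hi' => ha i (hst hi) (hst hi')

lemma ConvexSeqOn.increment_le (ha : ConvexSeqOn a s) (hs : s.OrdConnected) (hn : n ∈ s) {i : ℕ}
    (hni : n ≤ i) (hi : i + 1 ∈ s) : a (n + 1) - a n ≤ a (i + 1) - a i := by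
  induction i, hni using Nat.le_induction with
  | base => exact le_rfl
  | succ i hni ih =>
    have mem_of_le {j : ℕ} (hnj : n ≤ j) (hji : j ≤ i + 1 + 1) : j ∈ s := hs.out hn hi ⟨hnj, hji⟩
    exact (ih (mem_of_le (by lia) (by lia))).trans (ha i (mem_of_le hni (by lia)) hi)

variable [IsOrderedAddMonoid α]

lemma ConvexSeqOn.strictMonoOn (ha : ConvexSeqOn a s) (hs : s.OrdConnected) (hn : IsLeast s n)
    (h : a n < a (n + 1)) : StrictMonoOn a s :=
  strictMonoOn_of_lt_succ hs fun _ _ hi hi' =>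
    sub_pos.1 ((sub_pos.2 h).trans_le (ha.increment_le hs hn.1 (hn.2 hi) hi'))

lemma ConvexSeqOn.monotoneOn (ha : ConvexSeqOn a s) (hs : s.OrdConnected) (hn : IsLeast s n)
    (h : a n ≤ a (n + 1)) : MonotoneOn a s :=
  monotoneOn_of_le_succ hs fun _ _ hi hi' =>
    sub_nonneg.1 ((sub_nonneg.2 h).trans (ha.increment_le hs hn.1 (hn.2 hi) hi'))

end ConvexSequences

section SquaresOfSequences

variable {R : Type*} [CommRing R] [LinearOrder R] [IsStrictOrderedRing R] {f : ℕ → R} {s : Set ℕ}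
  {n : ℕ}

lemma strictMonoOn_of_convexSeqOn_sq (hf : ∀ i, 0 ≤ f i) (hconv : ConvexSeqOn (fun i => f i ^ 2) s)
    (hs : s.OrdConnected) (hn : IsLeast s n) (h : f n < f (n + 1)) : StrictMonoOn f s :=
  fun i hi j hj hij => (sq_lt_sq₀ (hf i) (hf j)).1 <|
    hconv.strictMonoOn hs hn ((sq_lt_sq₀ (hf _) (hf _)).2 h) hi hj hij

lemma monotoneOn_of_convexSeqOn_sq (hf : ∀ i, 0 ≤ f i) (hconv : ConvexSeqOn (fun i => f i ^ 2) s)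
    (hs : s.OrdConnected) (hn : IsLeast s n) (h : f n ≤ f (n + 1)) : MonotoneOn f s :=
  fun i hi j hj hij => (sq_le_sq₀ (hf i) (hf j)).1 <|
    hconv.monotoneOn hs hn ((sq_le_sq₀ (hf _) (hf _)).2 h) hi hj hij

end SquaresOfSequences

lemma nrm_nonneg (w : Fin 2 → ℝ) : 0 ≤ nrm w :=
  Real.sqrt_nonneg _

lemma nrm_sq (w : Fin 2 → ℝ) : nrm w ^ 2 = w 0 ^ 2 + w 1 ^ 2 :=
  Real.sq_sqrt (by positivity)

lemma act_mul (l : ℝ) (g k : F2) (w : Fin 2 → ℝ) : act l (g * k) w = act l g (act l k w) := by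
  simp only [act, map_mul, Matrix.SpecialLinearGroup.coe_mul, Matrix.mulVec_mulVec]

lemma rho_gh (l : ℝ) : rho l gh = hmat l := by
  simp [rho, gh]

lemma rho_gv (l : ℝ) : rho l gv = vmat l := by
  simp [rho, gv]

lemma hmat_inv (l : ℝ) : (hmat l)⁻¹ = hmat (-l) := by
  apply Subtype.ext
  rw [Matrix.SpecialLinearGroup.coe_inv]
  simp [hmat, Matrix.adjugate_fin_two_of]

lemma vmat_inv (l : ℝ) : (vmat l)⁻¹ = vmat (-l) := by
  apply Subtype.ext
  rw [Matrix.SpecialLinearGroup.coe_inv]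
  simp [vmat, Matrix.adjugate_fin_two_of]

lemma act_gh_inv (l : ℝ) (w : Fin 2 → ℝ) : act l gh⁻¹ w = act (-l) gh w := by
  rw [act, act, map_inv, rho_gh, rho_gh, hmat_inv]

lemma act_gv_inv (l : ℝ) (w : Fin 2 → ℝ) : act l gv⁻¹ w = act (-l) gv w := by
  rw [act, act, map_inv, rho_gv, rho_gv, vmat_inv]

lemma nrm_act_gh_sq (l : ℝ) (w : Fin 2 → ℝ) :
    nrm (act l gh w) ^ 2 = nrm w ^ 2 + 2 * (l * w 0 * w 1) + (l * w 1) ^ 2 := by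
  simp only [nrm_sq, act, rho_gh, hmat, Matrix.mulVec_apply_eq_sum, Fin.sum_univ_two,
    Matrix.of_apply, Matrix.cons_val_zero, Matrix.cons_val_one]
  ring

lemma nrm_act_gv_sq (l : ℝ) (w : Fin 2 → ℝ) :
    nrm (act l gv w) ^ 2 = nrm w ^ 2 + 2 * (l * w 0 * w 1) + (l * w 0) ^ 2 := by
  simp only [nrm_sq, act, rho_gv, vmat, Matrix.mulVec_apply_eq_sum, Fin.sum_univ_two,
    Matrix.of_apply, Matrix.cons_val_zero, Matrix.cons_val_one]
  ring

lemma nrm_act_gh_inv_sq (l : ℝ) (w : Fin 2 → ℝ) :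
    nrm (act l gh⁻¹ w) ^ 2 = nrm w ^ 2 - 2 * (l * w 0 * w 1) + (l * w 1) ^ 2 := by
  rw [act_gh_inv, nrm_act_gh_sq]
  ring

lemma nrm_act_gv_inv_sq (l : ℝ) (w : Fin 2 → ℝ) :
    nrm (act l gv⁻¹ w) ^ 2 = nrm w ^ 2 - 2 * (l * w 0 * w 1) + (l * w 0) ^ 2 := by
  rw [act_gv_inv, nrm_act_gv_sq]
  ring

lemma inv_mem_gens {s : F2} (hs : s ∈ gens) : s⁻¹ ∈ gens := by
  rcases hs with rfl | rfl | rfl | rfl <;> simp [gens]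

section Convexity

variable {l : ℝ}

lemma four_mul_abs_mul_mul_le (hl : 2 ≤ |l|) (a b : ℝ) :
    4 * |l * a * b| ≤ (l * a) ^ 2 + (l * b) ^ 2 := by
  have sq_two_mul_le : (2 * b) ^ 2 ≤ (l * b) ^ 2 := by
    rw [mul_pow, mul_pow, ← sq_abs l]
    gcongr
  calc 4 * |l * a * b| = 2 * |l * a| * |2 * b| := by simp only [abs_mul, Nat.abs_ofNat]; ring
    _ ≤ |l * a| ^ 2 + |2 * b| ^ 2 := two_mul_le_add_sq _ _
    _ = (l * a) ^ 2 + (2 * b) ^ 2 := by rw [sq_abs, sq_abs]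
    _ ≤ (l * a) ^ 2 + (l * b) ^ 2 := by gcongr

lemma two_mul_nrm_sq_le_of_mem_gens (hl : 2 ≤ |l|) {s t : F2} (hs : s ∈ gens) (ht : t ∈ gens)
    (hst : s ≠ t) (w : Fin 2 → ℝ) :
    2 * nrm w ^ 2 ≤ nrm (act l s w) ^ 2 + nrm (act l t w) ^ 2 := by
  have abs_cross_le := four_mul_abs_mul_mul_le hl (w 0) (w 1)
  have cross_le_abs := le_abs_self (l * w 0 * w 1)
  have neg_cross_le_abs := neg_le_abs (l * w 0 * w 1)
  have sq_nonneg₀ := sq_nonneg (l * w 0)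
  have sq_nonneg₁ := sq_nonneg (l * w 1)
  rcases hs with rfl | rfl | rfl | rfl <;> rcases ht with rfl | rfl | rfl | rfl <;>
    first
    | exact absurd rfl hst
    | simp only [nrm_act_gh_sq, nrm_act_gh_inv_sq, nrm_act_gv_sq, nrm_act_gv_inv_sq]
      linarith

lemma nrm_act_sq_increment_le (hl : 2 ≤ |l|) {p q r : F2} (hpq : q * p⁻¹ ∈ gens)
    (hqr : r * q⁻¹ ∈ gens) (hpr : r * p⁻¹ ≠ 1) (x : Fin 2 → ℝ) :
    nrm (act l q x) ^ 2 - nrm (act l p x) ^ 2 ≤ nrm (act l r x) ^ 2 - nrm (act l q x) ^ 2 := by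
  have hqp : p * q⁻¹ ∈ gens := by simpa using inv_mem_gens hpq
  have letters_ne : p * q⁻¹ ≠ r * q⁻¹ := fun h =>
    hpr (mul_inv_eq_one.2 (mul_right_cancel h).symm)
  have midpoint := two_mul_nrm_sq_le_of_mem_gens hl hqp hqr letters_ne (act l q x)
  rw [← act_mul, ← act_mul, inv_mul_cancel_right, inv_mul_cancel_right] at midpoint
  linarith

lemma IsGeodesicRay.convexSeqOn_nrm_act_sq (hl : 2 ≤ |l|) {g : ℕ → F2} (hg : IsGeodesicRay g)
    (x : Fin 2 → ℝ) : ConvexSeqOn (fun i => nrm (act l (g i) x) ^ 2) Set.univ :=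
  fun i _ _ => nrm_act_sq_increment_le hl (hg.2.1 i) (hg.2.1 (i + 1)) (hg.2.2 i) x

lemma IsGeodesicSegment.convexSeqOn_nrm_act_sq (hl : 2 ≤ |l|) {g : ℕ → F2} {N : ℕ}
    (hg : IsGeodesicSegment g N) (x : Fin 2 → ℝ) :
    ConvexSeqOn (fun i => nrm (act l (g i) x) ^ 2) (Set.Iic N) :=
  fun i _ (hi : i + 2 ≤ N) => nrm_act_sq_increment_le hl (hg.2.1 i (by lia))
    (hg.2.1 (i + 1) hi) (hg.2.2 i hi) x

end Convexity

theorem stmt3_general (l : ℝ) (hl : 2 ≤ |l|) (x : Fin 2 → ℝ) :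
    (∀ g : ℕ → F2, IsGeodesicRay g → ∀ n : ℕ,
      (nrm (act l (g n) x) < nrm (act l (g (n + 1)) x) →
        StrictMonoOn (fun j => nrm (act l (g j) x)) (Set.Ici n)) ∧
      (nrm (act l (g n) x) ≤ nrm (act l (g (n + 1)) x) →
        MonotoneOn (fun j => nrm (act l (g j) x)) (Set.Ici n))) ∧
    (∀ g : ℕ → F2, ∀ N : ℕ, IsGeodesicSegment g N → ∀ n : ℕ, n + 1 ≤ N →
      (nrm (act l (g n) x) < nrm (act l (g (n + 1)) x) →
        StrictMonoOn (fun j => nrm (act l (g j) x)) (Set.Icc n N)) ∧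
      (nrm (act l (g n) x) ≤ nrm (act l (g (n + 1)) x) →
        MonotoneOn (fun j => nrm (act l (g j) x)) (Set.Icc n N))) := by
  have nonneg (g : ℕ → F2) (i : ℕ) : 0 ≤ nrm (act l (g i) x) := nrm_nonneg _
  refine ⟨fun g hg n => ?_, fun g N hg n hnN => ?_⟩
  · have hconv := (hg.convexSeqOn_nrm_act_sq hl x).mono (Set.subset_univ (Set.Ici n))
    exact ⟨strictMonoOn_of_convexSeqOn_sq (nonneg g) hconv Set.ordConnected_Ici isLeast_Ici,
      monotoneOn_of_convexSeqOn_sq (nonneg g) hconv Set.ordConnected_Ici isLeast_Ici⟩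
  · have hconv := (hg.convexSeqOn_nrm_act_sq hl x).mono (Set.Icc_subset_Iic_self (a := n))
    have hn : IsLeast (Set.Icc n N) n := isLeast_Icc (Nat.le_of_succ_le hnN)
    exact ⟨strictMonoOn_of_convexSeqOn_sq (nonneg g) hconv Set.ordConnected_Icc hn,
      monotoneOn_of_convexSeqOn_sq (nonneg g) hconv Set.ordConnected_Icc hn⟩

theorem stmt3 (l : ℝ) (hl : 2 ≤ l) (x : Fin 2 → ℝ) (hx : x ∈ Circ) :
    (∀ g : ℕ → F2, IsGeodesicRay g → ∀ n : ℕ,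
      (nrm (act l (g n) x) < nrm (act l (g (n + 1)) x) →
        StrictMonoOn (fun j => nrm (act l (g j) x)) (Set.Ici n)) ∧
      (nrm (act l (g n) x) ≤ nrm (act l (g (n + 1)) x) →
        MonotoneOn (fun j => nrm (act l (g j) x)) (Set.Ici n))) ∧
    (∀ g : ℕ → F2, ∀ N : ℕ, IsGeodesicSegment g N → ∀ n : ℕ, n + 1 ≤ N →
      (nrm (act l (g n) x) < nrm (act l (g (n + 1)) x) →
        StrictMonoOn (fun j => nrm (act l (g j) x)) (Set.Icc n N)) ∧
      (nrm (act l (g n) x) ≤ nrm (act l (g (n + 1)) x) →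
        MonotoneOn (fun j => nrm (act l (g j) x)) (Set.Icc n N))) :=
  stmt3_general l (hl.trans (le_abs_self l)) x
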